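/- The Barnes G-function satisfies G(1/3)/G(2/3) = (2π)^{1/3} / (3^{1/6} · Γ(1/3)) · exp( (2π² − 3·ψ⁽¹⁾(1/3)) / (18π√3) ), where ψ⁽¹⁾ is the trigamma function. -/

import Mathlib

open Real MeasureTheory Filter

/-- Hurwitz zeta function ζ(s, a) for real a > 0, via analytic continuation. -/
noncomputable def hurwitzZetaReal (s : ℂ) (a : ℝ) : ℂ :=
  HurwitzZeta.hurwitzZeta (a : UnitAddCircle) s -
    ∑ k ∈ Finset.range (⌈a⌉₊ - 1), ((a - (⌈a⌉₊ - 1) + k : ℝ) : ℂ) ^ (-s)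

/-- ζ'(-1, a): derivative of the Hurwitz zeta function w.r.t. s at s = -1. -/
noncomputable def hurwitzZetaDerivNegOne (a : ℝ) : ℂ :=
  deriv (fun s => hurwitzZetaReal s a) (-1)

/-- Logarithm of the Glaisher–Kinkelin constant: log A = 1/12 - ζ'(-1). -/
noncomputable def logA : ℂ := 1 / 12 - deriv riemannZeta (-1)

/-- log G(z+1) for z > 0, via log G(z+1) = z log Γ(z) + ζ'(-1) - ζ'(-1, z). -/
noncomputable def logBarnesG1p (z : ℝ) : ℂ :=
  z * Real.log (Real.Gamma z) + deriv riemannZeta (-1) - hurwitzZetaDerivNegOne z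

/-- log G(x) for x > 0, via the recurrence G(z+1) = Γ(z) G(z) on (0, 1]. -/
noncomputable def logBarnesG (x : ℝ) : ℂ :=
  if x ≤ 1 then logBarnesG1p x - Real.log (Real.Gamma x) else logBarnesG1p (x - 1)

/-- The Barnes G-function (for positive real argument). -/
noncomputable def barnesG (x : ℝ) : ℂ := Complex.exp (logBarnesG x)

/-- The digamma function ψ = (log Γ)'. -/
noncomputable def digamma (x : ℝ) : ℝ := deriv (fun t => Real.log (Real.Gamma t)) x

/-- The trigamma function ψ⁽¹⁾ = (log Γ)''. -/
noncomputable def trigamma (x : ℝ) : ℝ :=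
  deriv (deriv (fun t => Real.log (Real.Gamma t))) x

/-- The Clausen function Cl₂(x) = ∑_{k ≥ 1} sin(k x) / k². -/
noncomputable def clausen2 (x : ℝ) : ℝ := ∑' k : ℕ, Real.sin ((k + 1) * x) / (k + 1) ^ 2

/-- Catalan's constant. -/
noncomputable def catalanConst : ℝ := ∑' k : ℕ, (-1 : ℝ) ^ k / (2 * (k : ℝ) + 1) ^ 2

/-!
The defining formula for `log G` and Euler's reflection formula for `Γ` give
`G(z) / G(1 - z) = (π / sin πz) ^ z / Γ(z) * exp (ζ'(-1, 1 - z) - ζ'(-1, z))` for `0 < z < 1`.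
Here `ζ'(-1, z) - ζ'(-1, 1 - z)` is twice the derivative at `-1` of the odd part of the Hurwitz zeta
function, which by the functional equation equals `Cl₂(2πz) / (2π)`. For `z = p / q`, splitting the
series `Cl₂` into residue classes mod `q` expresses it through the values `ψ⁽¹⁾(j / q)`, because
`ψ⁽¹⁾(x) = ∑ (x + n)⁻²`; the same splitting of `ζ(2)` gives `ψ⁽¹⁾(1/3) + ψ⁽¹⁾(2/3) = 4π² / 3`.
-/

/-- The logarithm of the `n`-th factor `(1 + 1/(n+1)) ^ x / (1 + x/(n+1))` of Euler's infinite
product for `Γ(1 + x)`. -/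
noncomputable def logGammaTerm (n : ℕ) (x : ℝ) : ℝ :=
  x * Real.log (1 + 1 / (n + 1)) - Real.log (1 + x / (n + 1))

/-- The derivative of `logGammaTerm n`: the `n`-th term of the series for the digamma function at
`1 + x`. -/
noncomputable def digammaTerm (n : ℕ) (x : ℝ) : ℝ :=
  Real.log (1 + 1 / (n + 1)) - (x + n + 1)⁻¹

lemma sum_range_logGammaTerm {x : ℝ} (hx : 0 < x) (N : ℕ) :
    ∑ n ∈ Finset.range N, logGammaTerm n x =
      Real.BohrMollerup.logGammaSeq x N + Real.log x + x * (Real.log (N + 1) - Real.log N) := by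
  have partial_sum : ∑ n ∈ Finset.range N, logGammaTerm n x = x * Real.log (N + 1) +
      Real.log N.factorial - ∑ n ∈ Finset.range N, Real.log (x + (n + 1 : ℕ)) := by
    induction N with
    | zero => simp
    | succ N ih =>
      have log_factor {y : ℝ} (hy : 0 < y) : Real.log (1 + y / ((N : ℝ) + 1)) =
          Real.log (y + (N + 1)) - Real.log (N + 1) := by
        rw [← Real.log_div (by positivity) (by positivity), add_div,
          div_self (Nat.cast_add_one_ne_zero N), add_comm]
      rw [Finset.sum_range_succ, ih, Finset.sum_range_succ, Nat.factorial_succ, Nat.cast_mul,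
        Real.log_mul (by positivity) (by positivity), logGammaTerm, log_factor one_pos,
        log_factor hx, add_comm (1 : ℝ)]
      push_cast
      ring
  rw [partial_sum, Real.BohrMollerup.logGammaSeq, Finset.sum_range_succ']
  simp only [Nat.cast_zero, add_zero]
  ring

lemma hasDerivAt_logGammaTerm (n : ℕ) {x : ℝ} (hx : 0 < x) :
    HasDerivAt (logGammaTerm n) (digammaTerm n x) x := by
  have h := ((hasDerivAt_id x).mul_const (Real.log (1 + 1 / ((n : ℝ) + 1)))).sub
    ((((hasDerivAt_id x).div_const ((n : ℝ) + 1)).const_add 1).log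
      (by simp only [id_eq]; positivity))
  refine h.congr_deriv ?_
  simp only [id_eq, digammaTerm]
  field_simp
  ring

lemma hasDerivAt_digammaTerm (n : ℕ) {x : ℝ} (hx : 0 < x) :
    HasDerivAt (digammaTerm n) ((x + n + 1) ^ 2)⁻¹ x := by
  have h := ((((hasDerivAt_id x).add_const (n : ℝ)).add_const 1).fun_inv
    (by simp only [id_eq]; positivity)).const_sub (Real.log (1 + 1 / ((n : ℝ) + 1)))
  refine h.congr_deriv ?_
  simp only [id_eq]
  ring

lemma abs_digammaTerm_le (n : ℕ) {x : ℝ} (hx : 0 ≤ x) :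
    |digammaTerm n x| ≤ (x + 1) * (((n : ℝ) + 1) ^ 2)⁻¹ := by
  have log_le : Real.log (1 + 1 / ((n : ℝ) + 1)) ≤ ((n : ℝ) + 1)⁻¹ := by
    simpa using Real.log_le_sub_one_of_pos (x := 1 + 1 / ((n : ℝ) + 1)) (by positivity)
  have le_log : ((n : ℝ) + 2)⁻¹ ≤ Real.log (1 + 1 / ((n : ℝ) + 1)) := by
    convert Real.one_sub_inv_le_log_of_pos (x := 1 + 1 / ((n : ℝ) + 1)) (by positivity) using 1
    field_simp
    ring
  have inv_sub_inv_le {y : ℝ} (hy : 0 ≤ y) :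
      ((n : ℝ) + 1)⁻¹ - (y + n + 1)⁻¹ ≤ y * (((n : ℝ) + 1) ^ 2)⁻¹ := by
    rw [inv_sub_inv (by positivity) (by positivity), ← div_eq_mul_inv, sq]
    gcongr <;> linarith
  have upper := inv_sub_inv_le hx
  have lower := inv_sub_inv_le zero_le_one
  have inv_le : (x + n + 1)⁻¹ ≤ ((n : ℝ) + 1)⁻¹ := by gcongr; linarith
  rw [show (1 : ℝ) + n + 1 = n + 2 by ring] at lower
  have : 0 ≤ x * (((n : ℝ) + 1) ^ 2)⁻¹ := by positivity
  have : 0 ≤ (((n : ℝ) + 1) ^ 2)⁻¹ := by positivity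
  rw [digammaTerm, abs_le]
  constructor <;> linarith

lemma summable_inv_nat_add_one_sq : Summable fun n : ℕ ↦ (((n : ℝ) + 1) ^ 2)⁻¹ := by
  simpa using (summable_nat_add_iff 1).2 (Real.summable_nat_pow_inv (p := 2).2 one_lt_two)

lemma norm_digammaTerm_le (n : ℕ) {b y : ℝ} (hy : y ∈ Set.Ioo 0 b) :
    ‖digammaTerm n y‖ ≤ (b + 1) * (((n : ℝ) + 1) ^ 2)⁻¹ :=
  (abs_digammaTerm_le n hy.1.le).trans (by gcongr; exact hy.2.le)

lemma logGammaTerm_one (n : ℕ) : logGammaTerm n 1 = 0 := by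
  rw [logGammaTerm, one_mul, sub_self]

section

variable {x : ℝ}

-- Both series are controlled on `(0, x + 2)`, which contains `x` and the point `1`, where every
-- `logGammaTerm` vanishes.
lemma summable_logGammaTerm (hx : 0 < x) : Summable fun n ↦ logGammaTerm n x :=
  summable_of_summable_hasDerivAt_of_isPreconnected (t := Set.Ioo 0 (x + 2)) (y₀ := 1)
    (summable_inv_nat_add_one_sq.mul_left (x + 2 + 1)) isOpen_Ioo isPreconnected_Ioo
    (fun n _ hy ↦ hasDerivAt_logGammaTerm n hy.1) (fun n _ hy ↦ norm_digammaTerm_le n hy)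
    ⟨one_pos, by linarith⟩ (by simpa only [logGammaTerm_one] using summable_zero)
    ⟨hx, by linarith⟩

lemma hasDerivAt_tsum_logGammaTerm (hx : 0 < x) :
    HasDerivAt (fun y ↦ ∑' n, logGammaTerm n y) (∑' n, digammaTerm n x) x :=
  hasDerivAt_tsum_of_isPreconnected (t := Set.Ioo 0 (x + 2)) (y₀ := 1)
    (summable_inv_nat_add_one_sq.mul_left (x + 2 + 1)) isOpen_Ioo isPreconnected_Ioo
    (fun n _ hy ↦ hasDerivAt_logGammaTerm n hy.1) (fun n _ hy ↦ norm_digammaTerm_le n hy)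
    ⟨one_pos, by linarith⟩ (by simpa only [logGammaTerm_one] using summable_zero)
    ⟨hx, by linarith⟩

lemma norm_inv_add_sq_le (n : ℕ) (hx : 0 < x) :
    ‖((x + n + 1) ^ 2)⁻¹‖ ≤ (((n : ℝ) + 1) ^ 2)⁻¹ := by
  rw [Real.norm_of_nonneg (by positivity)]
  gcongr
  linarith

lemma hasDerivAt_tsum_digammaTerm (hx : 0 < x) :
    HasDerivAt (fun y ↦ ∑' n, digammaTerm n y) (∑' n : ℕ, ((x + n + 1) ^ 2)⁻¹) x := by
  have summable_digammaTerm : Summable fun n ↦ digammaTerm n x :=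
    (summable_inv_nat_add_one_sq.mul_left (x + 1)).of_norm_bounded
      fun n ↦ abs_digammaTerm_le n hx.le
  exact hasDerivAt_tsum_of_isPreconnected summable_inv_nat_add_one_sq isOpen_Ioi
    isPreconnected_Ioi (fun n _ hy ↦ hasDerivAt_digammaTerm n hy)
    (fun n y (hy : 0 < y) ↦ norm_inv_add_sq_le n hy) hx summable_digammaTerm hx

lemma log_Gamma_eq_tsum (hx : 0 < x) :
    Real.log (Real.Gamma x) = ∑' n, logGammaTerm n x - Real.log x := by
  have lim_sum := (summable_logGammaTerm hx).hasSum.tendsto_sum_nat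
  simp only [sum_range_logGammaTerm hx] at lim_sum
  have lim_seq := ((Real.BohrMollerup.tendsto_log_gamma hx).add_const (Real.log x)).add
    (Real.tendsto_log_nat_add_one_sub_log.const_mul x)
  linarith only [tendsto_nhds_unique lim_sum lim_seq]

lemma deriv_log_Gamma_eq_tsum (hx : 0 < x) :
    deriv (fun t ↦ Real.log (Real.Gamma t)) x = ∑' n, digammaTerm n x - x⁻¹ := by
  have local_eq : (fun t ↦ Real.log (Real.Gamma t)) =ᶠ[nhds x]
      fun t ↦ ∑' n, logGammaTerm n t - Real.log t := by
    filter_upwards [Ioi_mem_nhds hx] with t ht using log_Gamma_eq_tsum ht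
  rw [local_eq.deriv_eq]
  exact ((hasDerivAt_tsum_logGammaTerm hx).sub (Real.hasDerivAt_log hx.ne')).deriv

lemma trigamma_eq_tsum_add (hx : 0 < x) :
    trigamma x = ∑' n : ℕ, ((x + n + 1) ^ 2)⁻¹ + (x ^ 2)⁻¹ := by
  have local_eq : deriv (fun t ↦ Real.log (Real.Gamma t)) =ᶠ[nhds x]
      fun t ↦ ∑' n, digammaTerm n t - t⁻¹ := by
    filter_upwards [Ioi_mem_nhds hx] with t ht using deriv_log_Gamma_eq_tsum ht
  rw [trigamma, local_eq.deriv_eq, ← sub_neg_eq_add]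
  exact ((hasDerivAt_tsum_digammaTerm hx).sub (hasDerivAt_inv hx.ne')).deriv

theorem hasSum_trigamma (hx : 0 < x) : HasSum (fun n : ℕ ↦ ((x + n) ^ 2)⁻¹) (trigamma x) := by
  have tail := (summable_inv_nat_add_one_sq.of_norm_bounded fun n ↦ norm_inv_add_sq_le n hx).hasSum
  refine (hasSum_nat_add_iff' 1).1 ?_
  simpa [trigamma_eq_tsum_add hx, add_assoc] using tail

end

lemma hasSum_of_residue_classes {α : Type*} [AddCommMonoid α] [TopologicalSpace α]
    [ContinuousAdd α] {f a : ℕ → α} {q : ℕ} (hq : q ≠ 0)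
    (h : ∀ j < q, HasSum (fun n ↦ f (q * n + j)) (a j)) :
    HasSum f (∑ j ∈ Finset.range q, a j) := by
  have class_sum (j : ℕ) (hj : j ∈ Finset.range q) :
      HasSum (fun k ↦ if k % q = j then f k else 0) (a j) := by
    have hjq : j < q := Finset.mem_range.1 hj
    have inj : Function.Injective fun n ↦ q * n + j :=
      (add_left_injective j).comp (mul_right_injective₀ hq)
    refine (inj.hasSum_iff fun k hk ↦ if_neg fun hkj ↦ hk ⟨k / q, ?_⟩).1 ?_
    · simp only [← hkj, Nat.div_add_mod]
    · simpa [Function.comp_def, Nat.mod_eq_of_lt hjq] using h j hjq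
  simpa [Nat.mod_lt _ (Nat.pos_of_ne_zero hq)] using hasSum_sum class_sum

theorem hasSum_periodic_div_sq {c : ℕ → ℝ} {q : ℕ} (hc : Function.Periodic c q) (hq : q ≠ 0) :
    HasSum (fun k : ℕ ↦ c k / (k + 1) ^ 2)
      (∑ j ∈ Finset.range q, c j * trigamma ((j + 1) / q) / q ^ 2) := by
  refine hasSum_of_residue_classes hq fun j _ ↦ ?_
  convert! ((hasSum_trigamma (x := (j + 1) / q) (by positivity)).mul_left (c j)).div_const
    ((q : ℝ) ^ 2) using 2 with n
  have periodic : c (q * n + j) = c j := by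
    simpa [add_comm, mul_comm] using hc.nat_mul n j
  rw [periodic]
  push_cast
  field_simp
  ring

theorem sum_trigamma {q : ℕ} (hq : q ≠ 0) :
    ∑ j ∈ Finset.range q, trigamma ((j + 1) / q) = q ^ 2 * (π ^ 2 / 6) := by
  have hq' : (q : ℝ) ≠ 0 := Nat.cast_ne_zero.2 hq
  have zeta_two : HasSum (fun k : ℕ ↦ 1 / ((k : ℝ) + 1) ^ 2) (π ^ 2 / 6) := by
    simpa using (hasSum_nat_add_iff' 1).2 hasSum_zeta_two
  have h := (hasSum_periodic_div_sq (c := fun _ ↦ 1) (fun _ ↦ rfl) hq).unique zeta_two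
  rw [← h, ← Finset.sum_div, mul_div_cancel₀ _ (pow_ne_zero 2 hq')]
  simp only [one_mul]

theorem clausen2_two_pi_mul_div (p : ℤ) {q : ℕ} (hq : q ≠ 0) :
    clausen2 (2 * π * (p / q)) =
      ∑ j ∈ Finset.range q,
        Real.sin ((j + 1) * (2 * π * (p / q))) * trigamma ((j + 1) / q) / q ^ 2 := by
  have hq' : (q : ℝ) ≠ 0 := Nat.cast_ne_zero.2 hq
  have periodic : Function.Periodic (fun k : ℕ ↦ Real.sin ((k + 1) * (2 * π * (p / q)))) q := by
    intro k
    refine (congrArg Real.sin ?_).trans (Real.sin_add_int_mul_two_pi _ p)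
    push_cast
    field_simp
    ring
  exact (hasSum_periodic_div_sq periodic hq).tsum_eq

lemma trigamma_one : trigamma 1 = π ^ 2 / 6 := by
  simpa using sum_trigamma one_ne_zero

lemma trigamma_one_third_add_trigamma_two_thirds :
    trigamma (1 / 3) + trigamma (2 / 3) = 4 * π ^ 2 / 3 := by
  have h := sum_trigamma three_ne_zero
  norm_num [Finset.sum_range_succ, trigamma_one] at h ⊢
  linarith

lemma clausen2_two_pi_div_three :
    clausen2 (2 * π * (1 / 3)) = √3 / 27 * (3 * trigamma (1 / 3) - 2 * π ^ 2) := by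
  have sin_one : Real.sin (2 * π * (1 / 3)) = √3 / 2 := by
    rw [show 2 * π * (1 / 3) = π - π / 3 by ring, Real.sin_pi_sub, Real.sin_pi_div_three]
  have sin_two : Real.sin (2 * (2 * π * (1 / 3))) = -(√3 / 2) := by
    rw [show 2 * (2 * π * (1 / 3)) = π / 3 + π by ring, Real.sin_add_pi, Real.sin_pi_div_three]
  have sin_three : Real.sin (3 * (2 * π * (1 / 3))) = 0 := by
    rw [show 3 * (2 * π * (1 / 3)) = 2 * π by ring, Real.sin_two_pi]
  have expansion : clausen2 (2 * π * (1 / 3)) =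
      √3 / 18 * (trigamma (1 / 3) - trigamma (2 / 3)) := by
    have h := clausen2_two_pi_mul_div 1 three_ne_zero
    norm_num [Finset.sum_range_succ, sin_one, sin_two, sin_three] at h ⊢
    linear_combination h
  linear_combination expansion - √3 / 18 * trigamma_one_third_add_trigamma_two_thirds

lemma sinZeta_two_eq_clausen2 (a : ℝ) :
    HurwitzZeta.sinZeta (a : UnitAddCircle) 2 = (clausen2 (2 * π * a) : ℂ) := by
  have h := (hasSum_nat_add_iff' 1).2 (HurwitzZeta.hasSum_nat_sinZeta a (s := 2) (by norm_num))
  simp only [Finset.range_one, Finset.sum_singleton, Nat.cast_zero, mul_zero, Real.sin_zero,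
    Complex.ofReal_zero, zero_div, sub_zero] at h
  rw [clausen2, Complex.ofReal_tsum, ← h.tsum_eq]
  refine tsum_congr fun k ↦ ?_
  rw [mul_comm ((k : ℝ) + 1)]
  norm_cast

lemma ne_neg_natCast_of_re_pos {s : ℂ} (hs : 0 < s.re) (m : ℕ) : s ≠ -m := by
  rintro rfl
  rw [Complex.neg_re, Complex.natCast_re] at hs
  linarith [m.cast_nonneg (α := ℝ)]

lemma deriv_hurwitzZetaOdd_one_sub_of_sin_eq_zero (a : UnitAddCircle) {s : ℂ} (hs : 0 < s.re)
    (hsin : Complex.sin (π * s / 2) = 0) :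
    deriv (HurwitzZeta.hurwitzZetaOdd a) (1 - s) =
      -(π * Complex.cos (π * s / 2) * (2 * π) ^ (-s) * Complex.Gamma s *
        HurwitzZeta.sinZeta a s) := by
  -- Only the factor `sin (π t / 2)` of the functional equation, which vanishes at `s`, contributes
  -- to the derivative.
  let g (t : ℂ) : ℂ := 2 * (2 * π) ^ (-t) * Complex.Gamma t * HurwitzZeta.sinZeta a t
  have diff_g : DifferentiableAt ℂ g s :=
    (((differentiableAt_id.neg.const_cpow (Or.inl (by simp [Real.pi_ne_zero]))).const_mul 2).mul
      (Complex.differentiableAt_Gamma _ (ne_neg_natCast_of_re_pos hs))).mul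
      (HurwitzZeta.differentiableAt_sinZeta a _)
  have deriv_sin := (((hasDerivAt_id s).const_mul (π : ℂ)).div_const 2).csin
  have functional_eq : (fun t ↦ HurwitzZeta.hurwitzZetaOdd a (1 - t)) =ᶠ[nhds s]
      (fun t : ℂ ↦ Complex.sin (π * t / 2)) * g := by
    filter_upwards [(isOpen_lt continuous_const Complex.continuous_re).mem_nhds hs] with t ht
    rw [HurwitzZeta.hurwitzZetaOdd_one_sub a (ne_neg_natCast_of_re_pos ht), Pi.mul_apply]
    simp only [g]
    ring
  have h := functional_eq.deriv_eq.trans (deriv_sin.mul diff_g.hasDerivAt).deriv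
  simp only [deriv_comp_const_sub, id_eq, hsin, zero_mul, add_zero, g] at h
  linear_combination -h

theorem deriv_hurwitzZetaOdd_neg_two_mul_nat_sub_one (a : UnitAddCircle) (n : ℕ) :
    deriv (HurwitzZeta.hurwitzZetaOdd a) (-2 * n - 1) =
      (-1) ^ n * π * (2 * n + 1).factorial / (2 * π) ^ (2 * n + 2) *
        HurwitzZeta.sinZeta a (2 * n + 2) := by
  have re_pos : 0 < (2 * n + 2 : ℂ).re := by norm_cast; positivity
  have angle : (π : ℂ) * (2 * n + 2) / 2 = (n + 1 : ℕ) * π := by push_cast; ring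
  have sin_eq : Complex.sin (π * (2 * n + 2) / 2) = 0 := by rw [angle, Complex.sin_nat_mul_pi]
  have cos_eq : Complex.cos (π * (2 * n + 2) / 2) = (-1) ^ (n + 1) := by
    rw [angle]
    exact_mod_cast congrArg ((↑) : ℝ → ℂ) (Real.cos_nat_mul_pi (n + 1))
  have Gamma_eq : Complex.Gamma (2 * n + 2) = (2 * n + 1).factorial := by
    rw [← Complex.Gamma_nat_eq_factorial]
    push_cast
    ring_nf
  have cpow_eq : (2 * π : ℂ) ^ (-(2 * n + 2 : ℂ)) = ((2 * π : ℂ) ^ (2 * n + 2))⁻¹ := by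
    rw [Complex.cpow_neg, ← Complex.cpow_natCast]
    push_cast
    rfl
  rw [show (-2 * n - 1 : ℂ) = 1 - (2 * n + 2) by ring,
    deriv_hurwitzZetaOdd_one_sub_of_sin_eq_zero a re_pos sin_eq, cos_eq, cpow_eq, Gamma_eq]
  ring

lemma deriv_hurwitzZetaOdd_neg_one (z : ℝ) :
    deriv (HurwitzZeta.hurwitzZetaOdd z) (-1) = (clausen2 (2 * π * z) / (4 * π) : ℝ) := by
  have h := deriv_hurwitzZetaOdd_neg_two_mul_nat_sub_one z 0
  norm_num [sinZeta_two_eq_clausen2] at h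
  have hπ : (π : ℂ) ≠ 0 := Complex.ofReal_ne_zero.2 Real.pi_ne_zero
  rw [h]
  push_cast
  field_simp
  ring

lemma hurwitzZetaReal_of_le_one (s : ℂ) {a : ℝ} (ha : a ≤ 1) :
    hurwitzZetaReal s a = HurwitzZeta.hurwitzZeta a s := by
  have ceil_le : ⌈a⌉₊ ≤ 1 := Nat.ceil_le.2 (by simpa using ha)
  rw [hurwitzZetaReal, Nat.sub_eq_zero_of_le ceil_le, Finset.range_zero, Finset.sum_empty, sub_zero]

theorem hurwitzZetaDerivNegOne_sub_one_sub {z : ℝ} (hz₀ : 0 ≤ z) (hz₁ : z ≤ 1) :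
    hurwitzZetaDerivNegOne z - hurwitzZetaDerivNegOne (1 - z) =
      (clausen2 (2 * π * z) / (2 * π) : ℝ) := by
  have coe_one_sub : ((1 - z : ℝ) : UnitAddCircle) = -(z : UnitAddCircle) := by
    rw [AddCircle.coe_sub, AddCircle.coe_period, zero_sub]
  have diff (a : UnitAddCircle) : DifferentiableAt ℂ (HurwitzZeta.hurwitzZeta a) (-1) :=
    HurwitzZeta.differentiableAt_hurwitzZeta a (by norm_num)
  have sub_eq_odd : HurwitzZeta.hurwitzZeta z - HurwitzZeta.hurwitzZeta (-(z : UnitAddCircle)) =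
      fun s ↦ 2 * HurwitzZeta.hurwitzZetaOdd z s := by
    ext s
    rw [Pi.sub_apply, HurwitzZeta.hurwitzZetaOdd_eq]
    ring
  simp only [hurwitzZetaDerivNegOne, hurwitzZetaReal_of_le_one _ hz₁,
    hurwitzZetaReal_of_le_one _ (sub_le_self 1 hz₀), coe_one_sub]
  rw [← deriv_sub (diff _) (diff _), sub_eq_odd,
    deriv_const_mul _ (HurwitzZeta.differentiable_hurwitzZetaOdd _ _), deriv_hurwitzZetaOdd_neg_one]
  push_cast
  ring

theorem barnesG_div_barnesG_one_sub {z : ℝ} (hz₀ : 0 < z) (hz₁ : z < 1) :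
    barnesG z / barnesG (1 - z) =
      ((π / Real.sin (π * z)) ^ z / Real.Gamma z *
        Real.exp (-(clausen2 (2 * π * z) / (2 * π))) : ℝ) := by
  have Gamma_pos : 0 < Real.Gamma z := Real.Gamma_pos_of_pos hz₀
  have Gamma_one_sub_pos : 0 < Real.Gamma (1 - z) := Real.Gamma_pos_of_pos (sub_pos.2 hz₁)
  have sin_pos : 0 < Real.sin (π * z) :=
    Real.sin_pos_of_pos_of_lt_pi (by positivity) (mul_lt_of_lt_one_right Real.pi_pos hz₁)
  have log_reflection : Real.log (Real.Gamma z) + Real.log (Real.Gamma (1 - z)) =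
      Real.log (π / Real.sin (π * z)) := by
    rw [← Real.log_mul Gamma_pos.ne' Gamma_one_sub_pos.ne', Real.Gamma_mul_Gamma_one_sub]
  have log_ratio : logBarnesG z - logBarnesG (1 - z) =
      (Real.log (π / Real.sin (π * z)) * z - Real.log (Real.Gamma z) +
        -(clausen2 (2 * π * z) / (2 * π)) : ℝ) := by
    have zeta_diff := hurwitzZetaDerivNegOne_sub_one_sub hz₀.le hz₁.le
    rw [logBarnesG, logBarnesG, if_pos hz₁.le, if_pos (sub_le_self 1 hz₀.le), logBarnesG1p,
      logBarnesG1p, ← log_reflection]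
    push_cast at zeta_diff ⊢
    linear_combination -zeta_diff
  rw [barnesG, barnesG, ← Complex.exp_sub, log_ratio, ← Complex.ofReal_exp, Real.exp_add,
    Real.exp_sub, Real.exp_log Gamma_pos, Real.rpow_def_of_pos (by positivity)]

/-- Closed form for G(1/3)/G(2/3). -/
theorem barnesG_one_third_div_two_thirds :
    barnesG (1 / 3) / barnesG (2 / 3) =
      (((2 * π) ^ ((1 : ℝ) / 3) / (3 ^ ((1 : ℝ) / 6) * Real.Gamma (1 / 3))
        * Real.exp ((2 * π ^ 2 - 3 * trigamma (1 / 3)) / (18 * π * Real.sqrt 3)) : ℝ) : ℂ) := by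
  have reflection := barnesG_div_barnesG_one_sub (z := 1 / 3) (by norm_num) (by norm_num)
  have base : π / Real.sin (π * (1 / 3)) = 2 * π / √3 := by
    rw [mul_one_div, Real.sin_pi_div_three]
    field_simp
  have power : (2 * π / √3) ^ ((1 : ℝ) / 3) = (2 * π) ^ ((1 : ℝ) / 3) / 3 ^ ((1 : ℝ) / 6) := by
    rw [Real.div_rpow (by positivity) (by positivity), Real.sqrt_eq_rpow,
      ← Real.rpow_mul (by norm_num)]
    norm_num
  have exponent : -(clausen2 (2 * π * (1 / 3)) / (2 * π)) =
      (2 * π ^ 2 - 3 * trigamma (1 / 3)) / (18 * π * √3) := by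
    rw [clausen2_two_pi_div_three]
    field_simp
    rw [Real.sq_sqrt (by norm_num)]
    ring
  rwa [show (1 : ℝ) - 1 / 3 = 2 / 3 by norm_num, base, power, exponent, div_div] at reflection
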